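/- arXiv:2207.14555 — 2 statements merged into one kernel-verified Lean document; each statement's English description precedes it below -/
import Mathlib

section
/- Piecewise-linear approximation of the rescaled drift path in probability (equation (C.1) of Appendix C): define, for ε ∈ (0,1), the path w^ε(ω)(t) = ε ∫_0^{t/ε²} b(ω,s) ds and the partial sums S(ω)(n) = ∫_0^n b(ω,s) ds for integers n ≥ 0. Then for every T > 0 and every η > 0, P( sup_{t ∈ [0,T]} | w^ε(ω)(t) − ε S(ω)(⌊t/ε²⌋) | > η ) → 0 as ε → 0; that is, sup_{t∈[0,T]} |w^ε − εS(⌊·/ε²⌋)| converges to 0 in probability. -/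
open MeasureTheory Filter Topology

noncomputable section

/-!
On a unit cell `(n, n + 1]`, splitting the path at height `K` and applying Markov's inequality and
Fubini's theorem to the part above `K` bounds the probability that the mean of `‖X‖` over the cell
exceeds `2 * K` by `c(K) ^ 2 / K ^ 2`, where `c(K)` is the largest `L²` norm of a truncated tail
`X s * 1_{K ≤ ‖X s‖}`. Take `K = η / (2 * ε)`. If no cell among the `O(ε⁻²)` cells meeting
`[0, T / ε ^ 2]` is bad, the approximation error stays below `η`, while by the union bound a bad
cell exists with probability `O(ε⁻²) * O(ε ^ 2) * c(K) ^ 2`. The powers of `ε` cancel, and `c(K)`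
tends to zero by uniform integrability, which for a stationary process follows from `β ∈ L²`.
-/

open scoped ENNReal NNReal

section

variable {ι Ω E : Type*} [MeasurableSpace Ω] {μ : Measure Ω} [NormedAddCommGroup E]

section UniformIntegrability

lemma memLp_of_integrable_norm_rpow [IsFiniteMeasure μ] {f : Ω → E}
    (hf : AEStronglyMeasurable f μ) {p : ℝ≥0∞} {q : ℝ} (hq : 0 < q) (hpq : p ≤ ENNReal.ofReal q)
    (hint : Integrable (fun ω => ‖f ω‖ ^ q) μ) : MemLp f p μ := by
  refine MemLp.mono_exponent ?_ hpq
  rw [← integrable_norm_rpow_iff hf (by simpa using hq) ENNReal.ofReal_ne_top]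
  simpa only [ENNReal.toReal_ofReal hq.le] using hint

/-- The modulus of uniform integrability of a family of functions in `Lᵖ`: the supremum over the
family of the `Lᵖ` norms of the parts of size at least `K`. The truncation is written as in
`MeasureTheory.UniformIntegrable.spec`. -/
def tailLpNorm (X : ι → Ω → E) (p : ℝ≥0∞) (μ : Measure Ω) (K : ℝ≥0) : ℝ≥0∞ :=
  ⨆ i, eLpNorm ({ω | K ≤ ‖X i ω‖₊}.indicator (X i)) p μ

lemma antitone_tailLpNorm (X : ι → Ω → E) (p : ℝ≥0∞) (μ : Measure Ω) :
    Antitone (tailLpNorm X p μ) := by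
  refine fun K L hKL => iSup_mono fun i => eLpNorm_mono_enorm fun ω => ?_
  simp only [enorm_indicator_eq_indicator_enorm]
  exact Set.indicator_le_indicator_of_subset (fun ω hω => hKL.trans hω) (fun _ => zero_le) ω

lemma tendsto_tailLpNorm_atTop {X : ι → Ω → E} {p : ℝ≥0∞} (hp : p ≠ 0) (hp' : p ≠ ∞)
    (hX : UniformIntegrable X p μ) : Tendsto (tailLpNorm X p μ) atTop (𝓝 0) := by
  refine ENNReal.tendsto_nhds_zero.2 fun c hc => ?_
  obtain ⟨r, hr, hrc⟩ := ENNReal.lt_iff_exists_nnreal_btwn.1 hc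
  obtain ⟨C, hC⟩ := hX.spec hp hp' (ε := r) (by exact_mod_cast hr)
  filter_upwards [eventually_ge_atTop C] with K hK
  calc tailLpNorm X p μ K ≤ tailLpNorm X p μ C := antitone_tailLpNorm X p μ hK
    _ ≤ ENNReal.ofReal r := iSup_le hC
    _ ≤ c := by simpa using hrc.le

lemma uniformIntegrable_comp_of_measurePreserving {Ω' : Type*} [MeasurableSpace Ω']
    {ν : Measure Ω'} [IsFiniteMeasure μ] [MeasurableSpace E] [BorelSpace E] {p : ℝ≥0∞}
    (hp : 1 ≤ p) (hp' : p ≠ ∞) {τ : ι → Ω → Ω'} (hτ : ∀ i, MeasurePreserving (τ i) μ ν)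
    {β : Ω' → E} (hβ : MemLp β p ν) : UniformIntegrable (fun i => β ∘ τ i) p μ := by
  have hLp i : MemLp (β ∘ τ i) p μ := hβ.comp_measurePreserving (hτ i)
  have hmap i : μ.map (β ∘ τ i) = ν.map β := by
    rw [← (hτ i).map_eq, AEMeasurable.map_map_of_aemeasurable _ (hτ i).aemeasurable]
    exact (hτ i).map_eq ▸ hβ.aestronglyMeasurable.aemeasurable
  rcases isEmpty_or_nonempty ι with _ | ⟨⟨j⟩⟩
  · exact uniformIntegrable_finite hp hp' hLp
  · exact ProbabilityTheory.MemLp.uniformIntegrable_of_identDistrib hp hp' (hLp j) fun i =>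
      { aemeasurable_fst := (hLp i).aestronglyMeasurable.aemeasurable
        aemeasurable_snd := (hLp j).aestronglyMeasurable.aemeasurable
        map_eq := (hmap i).trans (hmap j).symm }

end UniformIntegrability

section CellAverages

lemma enorm_div_le_one_add_indicator_rpow {p : ℝ} (hp : 1 ≤ p) {K : ℝ≥0} (hK : K ≠ 0) (f : ι → E)
    (i : ι) : ‖f i‖ₑ / K ≤ 1 + (‖{j | K ≤ ‖f j‖₊}.indicator f i‖ₑ / K) ^ p := by
  have hK₀ : (K : ℝ≥0∞) ≠ 0 := by exact_mod_cast hK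
  by_cases hi : K ≤ ‖f i‖₊
  · rw [Set.indicator_of_mem (by exact hi)]
    have hone : 1 ≤ ‖f i‖ₑ / K := by
      rw [ENNReal.le_div_iff_mul_le (.inl hK₀) (.inl ENNReal.coe_ne_top), one_mul]
      exact_mod_cast hi
    exact (ENNReal.le_rpow_self_of_one_le hone hp).trans le_add_self
  · refine le_add_right (ENNReal.div_le_of_le_mul ?_)
    rw [one_mul]
    exact_mod_cast (not_le.1 hi).le

variable {S : Type*} [MeasurableSpace S] {ν : Measure S}

lemma measurable_enorm_indicator_div_rpow {X : S → Ω → E}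
    (hX : StronglyMeasurable (Function.uncurry X)) (K : ℝ≥0) (p : ℝ) :
    Measurable (Function.uncurry fun ω s =>
      (‖{ω | K ≤ ‖X s ω‖₊}.indicator (X s) ω‖ₑ / K) ^ p) := by
  have hswap : StronglyMeasurable fun q : Ω × S => X q.2 q.1 := hX.comp_measurable measurable_swap
  have hind : StronglyMeasurable fun q : Ω × S => {ω | K ≤ ‖X q.2 ω‖₊}.indicator (X q.2) q.1 :=
    hswap.indicator (measurableSet_le measurable_const hswap.nnnorm.measurable)
  exact (hind.enorm.div_const _).pow_const p

lemma lintegral_lintegral_indicator_rpow_le [SFinite μ] [IsProbabilityMeasure ν] {p : ℝ≥0}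
    (hp : p ≠ 0) {X : S → Ω → E} (hX : StronglyMeasurable (Function.uncurry X)) {K : ℝ≥0}
    (hK : K ≠ 0) :
    ∫⁻ ω, ∫⁻ s, (‖{ω | K ≤ ‖X s ω‖₊}.indicator (X s) ω‖ₑ / K) ^ (p : ℝ) ∂ν ∂μ
      ≤ (tailLpNorm X p μ K / K) ^ (p : ℝ) := by
  have hcell s : ∫⁻ ω, (‖{ω | K ≤ ‖X s ω‖₊}.indicator (X s) ω‖ₑ / K) ^ (p : ℝ) ∂μ
      ≤ (tailLpNorm X p μ K / K) ^ (p : ℝ) := by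
    simp only [ENNReal.div_rpow_of_nonneg _ _ p.coe_nonneg]
    simp only [div_eq_mul_inv]
    rw [lintegral_mul_const' _ _ (by simp [hK]), ← eLpNorm_nnreal_pow_eq_lintegral hp]
    gcongr
    exact le_iSup (fun s => eLpNorm ({ω | K ≤ ‖X s ω‖₊}.indicator (X s)) p μ) s
  rw [lintegral_lintegral_swap (measurable_enorm_indicator_div_rpow hX K p).aemeasurable]
  calc _ ≤ ∫⁻ _, (tailLpNorm X p μ K / K) ^ (p : ℝ) ∂ν := lintegral_mono hcell
    _ = (tailLpNorm X p μ K / K) ^ (p : ℝ) := by simp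

lemma measure_two_mul_lt_lintegral_enorm_le [SFinite μ] [IsProbabilityMeasure ν] {p : ℝ≥0}
    (hp : 1 ≤ p) {X : S → Ω → E} (hX : StronglyMeasurable (Function.uncurry X)) {K : ℝ≥0}
    (hK : K ≠ 0) :
    μ {ω | 2 * K < ∫⁻ s, ‖X s ω‖ₑ ∂ν} ≤ (tailLpNorm X p μ K / K) ^ (p : ℝ) := by
  have hK₀ : (K : ℝ≥0∞) ≠ 0 := by exact_mod_cast hK
  set tail : Ω → ℝ≥0∞ := fun ω =>
    ∫⁻ s, (‖{ω | K ≤ ‖X s ω‖₊}.indicator (X s) ω‖ₑ / K) ^ (p : ℝ) ∂ν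
  have htail : Measurable tail :=
    (measurable_enorm_indicator_div_rpow hX K p).lintegral_prod_right
  have hsplit ω : (∫⁻ s, ‖X s ω‖ₑ ∂ν) / K ≤ 1 + tail ω := by
    calc (∫⁻ s, ‖X s ω‖ₑ ∂ν) / K = ∫⁻ s, ‖X s ω‖ₑ / K ∂ν := by
          simp only [div_eq_mul_inv, lintegral_mul_const' _ _ (ENNReal.inv_ne_top.2 hK₀)]
      _ ≤ ∫⁻ s, (1 + (‖{ω | K ≤ ‖X s ω‖₊}.indicator (X s) ω‖ₑ / K) ^ (p : ℝ)) ∂ν :=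
          lintegral_mono fun s => enorm_div_le_one_add_indicator_rpow hp hK (X s) ω
      _ = 1 + tail ω := by
          rw [lintegral_add_left measurable_const, lintegral_const, measure_univ, mul_one]
  have hlarge : {ω | 2 * K < ∫⁻ s, ‖X s ω‖ₑ ∂ν} ⊆ {ω | 1 ≤ tail ω} := by
    intro ω hω
    have htwo : 1 + 1 < 1 + tail ω := by
      rw [one_add_one_eq_two]
      refine lt_of_lt_of_le ?_ (hsplit ω)
      rwa [ENNReal.lt_div_iff_mul_lt (.inl hK₀) (.inl ENNReal.coe_ne_top)]
    exact (lt_of_add_lt_add_left htwo).le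
  calc μ {ω | 2 * K < ∫⁻ s, ‖X s ω‖ₑ ∂ν} ≤ μ {ω | 1 ≤ tail ω} := measure_mono hlarge
    _ ≤ ∫⁻ ω, tail ω ∂μ := by
      simpa using meas_ge_le_lintegral_div htail.aemeasurable one_ne_zero ENNReal.one_ne_top
    _ ≤ (tailLpNorm X p μ K / K) ^ (p : ℝ) :=
      lintegral_lintegral_indicator_rpow_le (zero_lt_one.trans_le hp).ne' hX hK

lemma measure_exists_lt_setLIntegral_Ioc_enorm_le [SFinite μ] {p : ℝ≥0} (hp : 1 ≤ p) {X : ℝ → Ω → E}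
    (hX : StronglyMeasurable (Function.uncurry X)) {K : ℝ≥0} (hK : K ≠ 0) (N : ℕ) :
    μ {ω | ∃ n ≤ N, 2 * K < ∫⁻ s in Set.Ioc (n : ℝ) (n + 1), ‖X s ω‖ₑ}
      ≤ (N + 1) * (tailLpNorm X p μ K / K) ^ (p : ℝ) := by
  have hcell (n : ℕ) : μ {ω | 2 * K < ∫⁻ s in Set.Ioc (n : ℝ) (n + 1), ‖X s ω‖ₑ}
      ≤ (tailLpNorm X p μ K / K) ^ (p : ℝ) :=
    have : IsProbabilityMeasure (volume.restrict (Set.Ioc (n : ℝ) (n + 1))) := ⟨by simp⟩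
    measure_two_mul_lt_lintegral_enorm_le hp hX hK
  have hunion : {ω | ∃ n ≤ N, 2 * K < ∫⁻ s in Set.Ioc (n : ℝ) (n + 1), ‖X s ω‖ₑ}
      = ⋃ n ∈ Finset.range (N + 1),
        {ω | 2 * K < ∫⁻ s in Set.Ioc (n : ℝ) (n + 1), ‖X s ω‖ₑ} := by
    ext ω
    simp
  calc _ ≤ ∑ n ∈ Finset.range (N + 1),
        μ {ω | 2 * K < ∫⁻ s in Set.Ioc (n : ℝ) (n + 1), ‖X s ω‖ₑ} :=
      hunion ▸ measure_biUnion_finset_le _ _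
    _ ≤ ∑ _n ∈ Finset.range (N + 1), (tailLpNorm X p μ K / K) ^ (p : ℝ) :=
      Finset.sum_le_sum fun n _ => hcell n
    _ = (N + 1) * (tailLpNorm X p μ K / K) ^ (p : ℝ) := by simp

end CellAverages

section FloorApproximation

variable [NormedSpace ℝ E] {f : ℝ → E}

lemma enorm_integral_sub_integral_floor_le (hf : AEStronglyMeasurable f) {x : ℝ} (hx : 0 ≤ x)
    (hfin : ∀ n ≤ ⌊x⌋₊, ∫⁻ s in Set.Ioc (n : ℝ) (n + 1), ‖f s‖ₑ ≠ ∞) :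
    ‖(∫ s in (0 : ℝ)..x, f s) - ∫ s in (0 : ℝ)..⌊x⌋, f s‖ₑ
      ≤ ∫⁻ s in Set.Ioc (⌊x⌋₊ : ℝ) (⌊x⌋₊ + 1), ‖f s‖ₑ := by
  have hcell n (hn : n ≤ ⌊x⌋₊) : IntegrableOn f (Set.Ioc (n : ℝ) (n + 1)) :=
    ⟨hf.restrict, (hfin n hn).lt_top⟩
  have hfloor : IntervalIntegrable f volume 0 ⌊x⌋₊ := by
    have hpieces k (hk : k < ⌊x⌋₊) : IntervalIntegrable f volume (k : ℝ) (k + 1 : ℕ) := by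
      rw [intervalIntegrable_iff_integrableOn_Ioc_of_le (by simp)]
      exact_mod_cast hcell k hk.le
    exact_mod_cast IntervalIntegrable.trans_iterate (a := fun k : ℕ => (k : ℝ)) hpieces
  have hsub : Set.Ioc (⌊x⌋₊ : ℝ) x ⊆ Set.Ioc (⌊x⌋₊ : ℝ) (⌊x⌋₊ + 1) :=
    Set.Ioc_subset_Ioc_right (Nat.lt_floor_add_one x).le
  have hrest : IntervalIntegrable f volume ⌊x⌋₊ x := by
    rw [intervalIntegrable_iff_integrableOn_Ioc_of_le (Nat.floor_le hx)]
    exact (hcell _ le_rfl).mono_set hsub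
  rw [← natCast_floor_eq_intCast_floor hx,
    intervalIntegral.integral_interval_sub_left (hfloor.trans hrest) hfloor,
    intervalIntegral.integral_of_le (Nat.floor_le hx)]
  exact (enorm_integral_le_lintegral_enorm f).trans (lintegral_mono_set hsub)

lemma iSup_norm_rescaled_integral_sub_floor_le (hf : AEStronglyMeasurable f) {T ε : ℝ}
    (hε : 0 < ε) {a : ℝ≥0}
    (ha : ∀ n ≤ ⌊T / ε ^ 2⌋₊, ∫⁻ s in Set.Ioc (n : ℝ) (n + 1), ‖f s‖ₑ ≤ a) :
    ⨆ t ∈ Set.Icc (0 : ℝ) T,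
      ‖(ε • ∫ s in (0 : ℝ)..(t / ε ^ 2), f s) - ε • ∫ s in (0 : ℝ)..⌊t / ε ^ 2⌋, f s‖
      ≤ ε * a := by
  refine Real.iSup_le (fun t => Real.iSup_le (fun ht => ?_) (by positivity)) (by positivity)
  have hx : 0 ≤ t / ε ^ 2 := div_nonneg ht.1 (by positivity)
  have hfloor : ⌊t / ε ^ 2⌋₊ ≤ ⌊T / ε ^ 2⌋₊ := by gcongr; exact ht.2
  have henorm := (enorm_integral_sub_integral_floor_le hf hx fun n hn =>
    ((ha n (hn.trans hfloor)).trans_lt ENNReal.coe_lt_top).ne).trans (ha _ hfloor)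
  rw [← smul_sub, norm_smul, Real.norm_of_nonneg hε.le]
  gcongr
  exact_mod_cast henorm

end FloorApproximation

section Rescaling

lemma tendsto_toNNReal_div_two_mul_atTop {η : ℝ} (hη : 0 < η) :
    Tendsto (fun ε : ℝ => (η / (2 * ε)).toNNReal) (𝓝[>] 0) atTop := by
  have hinv : Tendsto (fun ε : ℝ => η / 2 * ε⁻¹) (𝓝[>] 0) atTop :=
    tendsto_inv_nhdsGT_zero.const_mul_atTop (half_pos hη)
  refine (tendsto_real_toNNReal_atTop.comp hinv).congr fun ε => ?_
  simp only [Function.comp_apply, ← div_eq_mul_inv, div_div]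

lemma floor_add_one_mul_div_sq_le {T η ε : ℝ} (hT : 0 ≤ T) (hη : 0 < η) (hε : ε ∈ Set.Ioo 0 1)
    (c : ℝ≥0∞) :
    (⌊T / ε ^ 2⌋₊ + 1) * (c / (η / (2 * ε)).toNNReal) ^ 2
      ≤ ENNReal.ofReal (4 * (T + 1) / η ^ 2) * c ^ 2 := by
  have hε₀ : 0 < ε := hε.1
  have hreal : (⌊T / ε ^ 2⌋₊ + 1) / (η / (2 * ε)) ^ 2 ≤ 4 * (T + 1) / η ^ 2 := by
    calc (⌊T / ε ^ 2⌋₊ + 1) / (η / (2 * ε)) ^ 2 ≤ (T / ε ^ 2 + 1) / (η / (2 * ε)) ^ 2 := by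
          gcongr
          exact Nat.floor_le (by positivity)
      _ = 4 * (T + ε ^ 2) / η ^ 2 := by field_simp; ring
      _ ≤ 4 * (T + 1) / η ^ 2 := by
          gcongr
          exact pow_le_one₀ hε₀.le hε.2.le
  calc (⌊T / ε ^ 2⌋₊ + 1) * (c / ENNReal.ofReal (η / (2 * ε))) ^ 2
      = ENNReal.ofReal ((⌊T / ε ^ 2⌋₊ + 1) / (η / (2 * ε)) ^ 2) * c ^ 2 := by
        rw [ENNReal.ofReal_div_of_pos (y := (η / (2 * ε)) ^ 2) (by positivity),
          ENNReal.ofReal_pow (by positivity), ENNReal.ofReal_add (by positivity) zero_le_one,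
          ENNReal.ofReal_natCast, ENNReal.ofReal_one, ENNReal.div_eq_inv_mul, mul_pow,
          ENNReal.div_eq_inv_mul, ENNReal.inv_pow]
        ring
    _ ≤ ENNReal.ofReal (4 * (T + 1) / η ^ 2) * c ^ 2 := by gcongr

end Rescaling

theorem rescaled_drift_piecewise_linear_approximation_general [SFinite μ] [NormedSpace ℝ E]
    [CompleteSpace E] {X : ℝ → Ω → E} (hXmeas : StronglyMeasurable (Function.uncurry X))
    (hX : UniformIntegrable X 2 μ) {T η : ℝ} (hT : 0 ≤ T) (hη : 0 < η) :
    Tendsto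
      (fun ε : ℝ => μ {ω | η <
        ⨆ t ∈ Set.Icc (0 : ℝ) T,
          ‖(ε • ∫ s in (0 : ℝ)..(t / ε ^ 2), X s ω) -
            ε • ∫ s in (0 : ℝ)..⌊t / ε ^ 2⌋, X s ω‖})
      (𝓝[>] 0) (𝓝 0) := by
  set K : ℝ → ℝ≥0 := fun ε => (η / (2 * ε)).toNNReal
  have hbound : Tendsto
      (fun ε => ENNReal.ofReal (4 * (T + 1) / η ^ 2) * tailLpNorm X 2 μ (K ε) ^ 2)
      (𝓝[>] 0) (𝓝 0) := by
    have htail : Tendsto (fun ε => tailLpNorm X 2 μ (K ε)) (𝓝[>] 0) (𝓝 0) :=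
      (tendsto_tailLpNorm_atTop two_ne_zero ENNReal.ofNat_ne_top hX).comp
        (tendsto_toNNReal_div_two_mul_atTop hη)
    simpa using ENNReal.Tendsto.const_mul (htail.ennrpow_const 2) (.inr ENNReal.ofReal_ne_top)
  refine tendsto_of_tendsto_of_tendsto_of_le_of_le' tendsto_const_nhds hbound
    (.of_forall fun _ => zero_le) ?_
  filter_upwards [Ioo_mem_nhdsGT one_pos] with ε hε
  have hε₀ : 0 < ε := hε.1
  have hK : K ε ≠ 0 := (Real.toNNReal_pos.2 (by positivity)).ne'
  refine (measure_mono ?_).trans <| (measure_exists_lt_setLIntegral_Ioc_enorm_le (p := 2)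
    one_le_two hXmeas hK ⌊T / ε ^ 2⌋₊).trans ?_
  · intro ω hω
    by_contra! hgood
    have hpath : StronglyMeasurable fun s => X s ω := hXmeas.comp_measurable measurable_prodMk_right
    have hsup := iSup_norm_rescaled_integral_sub_floor_le hpath.aestronglyMeasurable hε₀
      (a := 2 * K ε) (T := T) (by simpa using hgood)
    rw [NNReal.coe_mul, Real.coe_toNNReal _ (by positivity)] at hsup
    refine hω.not_ge (hsup.trans_eq ?_)
    push_cast
    field_simp
  · simpa using floor_add_one_mul_div_sq_le hT hη hε (tailLpNorm X 2 μ (K ε))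

end

/-- equation (C.1) of Appendix C: with `w^ε(ω)(t) = ε ∫_0^{t/ε²} b(ω,s) ds`
and `S(ω)(n) = ∫_0^n b(ω,s) ds`, for every `T > 0` and `η > 0`,
`P(sup_{t ∈ [0,T]} |w^ε(ω)(t) − ε S(ω)(⌊t/ε²⌋)| > η) → 0` as `ε → 0`;
here `b(ω,s) = β(τ_s ω)`. -/
theorem rescaled_drift_piecewise_linear_approximation
    {d : ℕ} (hd : 1 ≤ d) (δ : ℝ) (hδ : δ ∈ Set.Ioo (0 : ℝ) 1)
    {Ω : Type*} [MeasurableSpace Ω] (P : Measure Ω) [IsProbabilityMeasure P]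
    (τ : ℝ → Ω → Ω)
    (hτ0 : τ 0 = id)
    (hτgrp : ∀ t s : ℝ, τ t ∘ τ s = τ (t + s))
    (hτmeas : Measurable fun p : ℝ × Ω => τ p.1 p.2)
    (hτmp : ∀ t : ℝ, MeasurePreserving (τ t) P P)
    (β : Ω → EuclideanSpace ℝ (Fin d)) (hβmeas : Measurable β)
    (hβint : Integrable (fun ω => ‖β ω‖ ^ ((2 : ℝ) + δ)) P) :
    ∀ T : ℝ, 0 < T → ∀ η : ℝ, 0 < η →
      Tendsto
        (fun ε : ℝ => P {ω | η <
          ⨆ t ∈ Set.Icc (0 : ℝ) T,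
            ‖(ε • ∫ s in (0 : ℝ)..(t / ε ^ 2), β (τ s ω)) -
              ε • ∫ s in (0 : ℝ)..((⌊t / ε ^ 2⌋ : ℤ) : ℝ), β (τ s ω)‖})
        (𝓝[Set.Ioo (0 : ℝ) 1] 0) (𝓝 0) := by
  intro T hT η hη
  have hβLp : MemLp β 2 P :=
    memLp_of_integrable_norm_rpow hβmeas.aestronglyMeasurable (by linarith [hδ.1])
      (by simpa using ENNReal.ofReal_le_ofReal (by linarith [hδ.1] : (2 : ℝ) ≤ 2 + δ)) hβint
  rw [nhdsWithin_Ioo_eq_nhdsGT one_pos]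
  exact rescaled_drift_piecewise_linear_approximation_general (X := fun s => β ∘ τ s)
    (hβmeas.comp hτmeas).stronglyMeasurable
    (uniformIntegrable_comp_of_measurePreserving one_le_two ENNReal.ofNat_ne_top hτmp hβLp)
    hT.le hη

end
end

section
/- Finiteness of the double Riesz integral with capped correlations (from Appendix B): let d ∈ ℕ with d ≥ 3 and γ ∈ (2,∞). Then ∫_{ℝ^d} ∫_{ℝ^d} |x|^{1−d} |y|^{1−d} (max(|x−y|, 1))^{−γ} dx dy < ∞. (This is the integral bounding E[|S_α|²] uniformly in α in the construction of the stream matrix.) -/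
open MeasureTheory

noncomputable section

/-! Neither the triangle inequality nor a convolution estimate is needed. Write `a, b, c` for
`‖x‖, ‖y‖, ‖x - y‖` and let `f t` behave like `t ^ (-p)` for `t ≤ 1` and like `t ^ (-(p + q))` for
`t ≥ 1`. The integrand is at most the product of the values of `f` at two of the three arguments
`a, b, c`, provided `q ≤ p` and `2 * q ≤ γ`: if `c` is the largest, its decay factor is shared
between `a` and `b`; if `b` (or, symmetrically, `a`) is the largest, the singularity at `b` is
traded for one at `c`, because `t ^ (-p) * max t 1 ^ q` is antitone. By translation invariance each
of the three products integrates to `(∫ f ‖x‖) ^ 2`, which is finite for `p < dim < p + q`. -/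

open Set Module

/-- The function equal to `t ^ (-p)` on `(0, 1]` and to `t ^ (-s)` on `[1, ∞)`: a power law with
independent exponents at the origin and at infinity. Writing it as a product over `min t 1` and
`max t 1` makes these functions multiply by adding exponents. -/
def twoScalePower (p s t : ℝ) : ℝ := min t 1 ^ (-p) * max t 1 ^ (-s)

section TwoScalePower

variable {p q s t : ℝ}

lemma twoScalePower_of_le_one (h : t ≤ 1) : twoScalePower p s t = t ^ (-p) := by
  simp [twoScalePower, h]

lemma twoScalePower_of_one_le (h : 1 ≤ t) : twoScalePower p s t = t ^ (-s) := by
  simp [twoScalePower, h]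

lemma twoScalePower_self (p t : ℝ) : twoScalePower p p t = t ^ (-p) := by
  rcases le_total t 1 with h | h
  · exact twoScalePower_of_le_one h
  · exact twoScalePower_of_one_le h

lemma twoScalePower_zero_left (s t : ℝ) : twoScalePower 0 s t = max t 1 ^ (-s) := by
  simp [twoScalePower]

lemma twoScalePower_nonneg (ht : 0 ≤ t) : 0 ≤ twoScalePower p s t := by
  unfold twoScalePower; positivity

lemma twoScalePower_mul {p' s' : ℝ} (ht : 0 < t) :
    twoScalePower p s t * twoScalePower p' s' t = twoScalePower (p + p') (s + s') t := by
  have hmin : 0 < min t 1 := lt_min ht one_pos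
  have hmax : 0 < max t 1 := lt_max_of_lt_left ht
  simp only [twoScalePower, neg_add, Real.rpow_add hmin, Real.rpow_add hmax]
  ring

lemma antitoneOn_twoScalePower (hp : 0 ≤ p) (hs : 0 ≤ s) :
    AntitoneOn (twoScalePower p s) (Ioi 0) := by
  intro t (ht : 0 < t) u (hu : 0 < u) htu
  have hmin : min u 1 ^ (-p) ≤ min t 1 ^ (-p) :=
    Real.rpow_le_rpow_of_nonpos (lt_min ht one_pos) (by gcongr) (neg_nonpos.2 hp)
  have hmax : max u 1 ^ (-s) ≤ max t 1 ^ (-s) :=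
    Real.rpow_le_rpow_of_nonpos (by positivity) (by gcongr) (neg_nonpos.2 hs)
  exact mul_le_mul hmin hmax (by positivity) (by positivity)

@[fun_prop]
lemma measurable_twoScalePower (p s : ℝ) : Measurable (twoScalePower p s) := by
  unfold twoScalePower; fun_prop

lemma integrableOn_twoScalePower_Ioi (hp : p < 1) (hs : 1 < s) :
    IntegrableOn (twoScalePower p s) (Ioi 0) := by
  have near_zero : IntegrableOn (twoScalePower p s) (Ioo 0 1) :=
    ((intervalIntegral.integrableOn_Ioo_rpow_iff one_pos).2 (neg_lt_neg hp)).congr_fun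
      (fun t ht ↦ (twoScalePower_of_le_one ht.2.le).symm) measurableSet_Ioo
  have near_infinity : IntegrableOn (twoScalePower p s) (Ici 1) :=
    (integrableOn_Ici_iff_integrableOn_Ioi (by simp)).2
      (integrableOn_Ioi_rpow_of_lt (neg_lt_neg hs) one_pos) |>.congr_fun
      (fun t ht ↦ (twoScalePower_of_one_le ht).symm) measurableSet_Ici
  rw [← Ioo_union_Ici_eq_Ioi one_pos]
  exact near_zero.union near_infinity

lemma mul_max_one_rpow_le_twoScalePower_mul_of_le {a b c : ℝ} (hq : 0 ≤ q) (ha : 0 < a)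
    (hb : 0 < b) (hac : a ≤ c) (hbc : b ≤ c) :
    a ^ (-p) * b ^ (-p) * max c 1 ^ (-(2 * q)) ≤
      twoScalePower p (p + q) a * twoScalePower p (p + q) b := by
  have hc : 0 < c := ha.trans_le hac
  have decay : AntitoneOn (twoScalePower 0 q) (Ioi 0) := antitoneOn_twoScalePower le_rfl hq
  rw [← twoScalePower_zero_left, ← twoScalePower_self, ← twoScalePower_self]
  calc twoScalePower p p a * twoScalePower p p b * twoScalePower 0 (2 * q) c
      = twoScalePower p p a * twoScalePower p p b *
          (twoScalePower 0 q c * twoScalePower 0 q c) := by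
        rw [twoScalePower_mul hc, add_zero, two_mul]
    _ ≤ twoScalePower p p a * twoScalePower p p b *
          (twoScalePower 0 q a * twoScalePower 0 q b) := by
        gcongr ?_ * (?_ * ?_)
        · exact mul_nonneg (twoScalePower_nonneg ha.le) (twoScalePower_nonneg hb.le)
        · exact twoScalePower_nonneg hc.le
        · exact twoScalePower_nonneg ha.le
        · exact decay ha hc hac
        · exact decay hb hc hbc
    _ = twoScalePower p p a * twoScalePower 0 q a *
          (twoScalePower p p b * twoScalePower 0 q b) := by ring
    _ = twoScalePower p (p + q) a * twoScalePower p (p + q) b := by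
        rw [twoScalePower_mul ha, twoScalePower_mul hb, add_zero]

lemma mul_max_one_rpow_le_twoScalePower_mul_of_ge {a b c : ℝ} (hq : 0 ≤ q) (hqp : q ≤ p)
    (ha : 0 < a) (hc : 0 < c) (hab : a ≤ b) (hcb : c ≤ b) :
    a ^ (-p) * b ^ (-p) * max c 1 ^ (-(2 * q)) ≤
      twoScalePower p (p + q) a * twoScalePower p (p + q) c := by
  have hb : 0 < b := ha.trans_le hab
  have trade : twoScalePower p p b ≤ twoScalePower p (p - q) c * twoScalePower 0 q a :=
    calc twoScalePower p p b
        = twoScalePower p (p - q) b * twoScalePower 0 q b := by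
          rw [twoScalePower_mul hb, add_zero, sub_add_cancel]
      _ ≤ twoScalePower p (p - q) c * twoScalePower 0 q a :=
          mul_le_mul (antitoneOn_twoScalePower (hq.trans hqp) (sub_nonneg.2 hqp) hc hb hcb)
            (antitoneOn_twoScalePower le_rfl hq ha hb hab) (twoScalePower_nonneg hb.le)
            (twoScalePower_nonneg hc.le)
  rw [← twoScalePower_zero_left, ← twoScalePower_self, ← twoScalePower_self]
  calc twoScalePower p p a * twoScalePower p p b * twoScalePower 0 (2 * q) c
      ≤ twoScalePower p p a * (twoScalePower p (p - q) c * twoScalePower 0 q a) *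
          twoScalePower 0 (2 * q) c := by
        gcongr ?_ * ?_ * _
        · exact twoScalePower_nonneg hc.le
        · exact twoScalePower_nonneg ha.le
    _ = twoScalePower p p a * twoScalePower 0 q a *
          (twoScalePower p (p - q) c * twoScalePower 0 (2 * q) c) := by ring
    _ = twoScalePower p (p + q) a * twoScalePower p (p + q) c := by
        rw [twoScalePower_mul ha, twoScalePower_mul hc, add_zero,
          show p - q + 2 * q = p + q by ring]

lemma mul_max_one_rpow_le_twoScalePower_pairs {γ a b c : ℝ} (hq : 0 ≤ q) (hqp : q ≤ p)
    (hqγ : 2 * q ≤ γ) (ha : 0 < a) (hb : 0 < b) (hc : 0 < c) :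
    a ^ (-p) * b ^ (-p) * max c 1 ^ (-γ) ≤
      twoScalePower p (p + q) a * twoScalePower p (p + q) b +
        twoScalePower p (p + q) a * twoScalePower p (p + q) c +
        twoScalePower p (p + q) b * twoScalePower p (p + q) c := by
  have hfa := twoScalePower_nonneg (p := p) (s := p + q) ha.le
  have hfb := twoScalePower_nonneg (p := p) (s := p + q) hb.le
  have hfc := twoScalePower_nonneg (p := p) (s := p + q) hc.le
  have hfab := mul_nonneg hfa hfb
  have hfac := mul_nonneg hfa hfc
  have hfbc := mul_nonneg hfb hfc
  have reduce_exponent :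
      a ^ (-p) * b ^ (-p) * max c 1 ^ (-γ) ≤ a ^ (-p) * b ^ (-p) * max c 1 ^ (-(2 * q)) := by
    gcongr
    exact le_max_right c 1
  refine reduce_exponent.trans ?_
  by_cases hc_max : a ≤ c ∧ b ≤ c
  · linarith [mul_max_one_rpow_le_twoScalePower_mul_of_le (p := p) hq ha hb hc_max.1 hc_max.2]
  rcases le_total a b with hab | hba
  · have hcb : c ≤ b := by grind
    linarith [mul_max_one_rpow_le_twoScalePower_mul_of_ge hq hqp ha hc hab hcb]
  · have hca : c ≤ a := by grind
    rw [mul_comm (a ^ (-p))]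
    linarith [mul_max_one_rpow_le_twoScalePower_mul_of_ge hq hqp hb hc hba hca]

end TwoScalePower

lemma lintegral_lintegral_mul_add_mul_sub_add_mul_sub {G : Type*} [AddGroup G]
    [MeasurableSpace G] [MeasurableAdd₂ G] [MeasurableNeg G] (μ : Measure G) [SFinite μ]
    [μ.IsAddLeftInvariant] [μ.IsAddRightInvariant] [μ.IsNegInvariant] {f : G → ENNReal}
    (hf : Measurable f) :
    ∫⁻ x, ∫⁻ y, (f x * f y + f x * f (x - y) + f y * f (x - y)) ∂μ ∂μ =
      3 * (∫⁻ x, f x ∂μ) ^ 2 := by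
  set I := ∫⁻ x, f x ∂μ
  have inner_integral (x : G) : ∫⁻ y, (f x * f y + f x * f (x - y) + f y * f (x - y)) ∂μ =
      f x * I + f x * I + ∫⁻ y, f y * f (x - y) ∂μ := by
    rw [lintegral_add_left (by fun_prop), lintegral_add_left (by fun_prop),
      lintegral_const_mul _ hf, lintegral_const_mul _ (by fun_prop), lintegral_sub_left_eq_self]
  have convolution : ∫⁻ x, ∫⁻ y, f y * f (x - y) ∂μ ∂μ = I * I := by
    rw [lintegral_lintegral_swap (by fun_prop)]
    calc ∫⁻ y, ∫⁻ x, f y * f (x - y) ∂μ ∂μ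
        = ∫⁻ y, f y * I ∂μ := by
          congr with y
          rw [lintegral_const_mul _ (by fun_prop), lintegral_sub_right_eq_self]
      _ = I * I := lintegral_mul_const _ hf
  simp_rw [inner_integral]
  rw [lintegral_add_left (by fun_prop), lintegral_add_left (by fun_prop),
    lintegral_mul_const _ hf, convolution]
  ring

section FiniteDimensional

/-- The radial weight `twoScalePower p s ‖x‖`, with values in `ENNReal` so that its products can be
integrated without integrability side conditions. -/
def twoScaleWeight {E : Type*} [Norm E] (p s : ℝ) (x : E) : ENNReal :=
  ENNReal.ofReal (twoScalePower p s ‖x‖)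

variable {E : Type*} [NormedAddCommGroup E]

lemma twoScaleWeight_mul (p s : ℝ) (x y : E) : twoScaleWeight p s x * twoScaleWeight p s y =
    ENNReal.ofReal (twoScalePower p s ‖x‖ * twoScalePower p s ‖y‖) :=
  (ENNReal.ofReal_mul (twoScalePower_nonneg (norm_nonneg x))).symm

lemma ofReal_riesz_le_twoScaleWeight_pairs {p q γ : ℝ} (hq : 0 ≤ q) (hqp : q ≤ p)
    (hqγ : 2 * q ≤ γ) {x y : E} (hx : x ≠ 0) (hy : y ≠ 0) (hxy : x ≠ y) :
    ENNReal.ofReal (‖x‖ ^ (-p) * ‖y‖ ^ (-p) * max ‖x - y‖ 1 ^ (-γ)) ≤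
      twoScaleWeight p (p + q) x * twoScaleWeight p (p + q) y +
        twoScaleWeight p (p + q) x * twoScaleWeight p (p + q) (x - y) +
        twoScaleWeight p (p + q) y * twoScaleWeight p (p + q) (x - y) := by
  have hpair_nonneg (z w : E) :
      0 ≤ twoScalePower p (p + q) ‖z‖ * twoScalePower p (p + q) ‖w‖ :=
    mul_nonneg (twoScalePower_nonneg (norm_nonneg z)) (twoScalePower_nonneg (norm_nonneg w))
  simp only [twoScaleWeight_mul]
  rw [← ENNReal.ofReal_add (hpair_nonneg _ _) (hpair_nonneg _ _),
    ← ENNReal.ofReal_add (add_nonneg (hpair_nonneg _ _) (hpair_nonneg _ _)) (hpair_nonneg _ _)]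
  exact ENNReal.ofReal_le_ofReal <| mul_max_one_rpow_le_twoScalePower_pairs hq hqp hqγ
    (norm_pos_iff.2 hx) (norm_pos_iff.2 hy) (norm_pos_iff.2 (sub_ne_zero.2 hxy))

variable [MeasurableSpace E] [BorelSpace E]

lemma measurable_twoScaleWeight (p s : ℝ) : Measurable (twoScaleWeight p s : E → ENNReal) := by
  unfold twoScaleWeight; fun_prop

variable [NormedSpace ℝ E] [FiniteDimensional ℝ E] [Nontrivial E] (μ : Measure E)
  [μ.IsAddHaarMeasure]

lemma integrable_twoScalePower_norm {p s : ℝ} (hp : p < finrank ℝ E) (hs : finrank ℝ E < s) :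
    Integrable (fun x : E ↦ twoScalePower p s ‖x‖) μ := by
  rw [integrable_fun_norm_addHaar]
  set m := finrank ℝ E - 1
  have hm : (finrank ℝ E : ℝ) = m + 1 := by
    exact_mod_cast (Nat.sub_add_cancel (finrank_pos (R := ℝ) (M := E))).symm
  have polar (t : ℝ) (ht : t ∈ Ioi 0) :
      twoScalePower (p - m) (s - m) t = t ^ m • twoScalePower p s t := by
    have hpow : t ^ m = twoScalePower (-m) (-m) t := by
      rw [twoScalePower_self, neg_neg, Real.rpow_natCast]
    rw [smul_eq_mul, hpow, twoScalePower_mul ht, neg_add_eq_sub, neg_add_eq_sub]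
  exact (integrableOn_twoScalePower_Ioi (by linarith) (by linarith)).congr_fun polar
    measurableSet_Ioi

lemma lintegral_twoScaleWeight_lt_top {p s : ℝ} (hp : p < finrank ℝ E)
    (hs : finrank ℝ E < s) : ∫⁻ x : E, twoScaleWeight p s x ∂μ < ⊤ :=
  (integrable_twoScalePower_norm μ hp hs).lintegral_lt_top

end FiniteDimensional

theorem double_riesz_integral_finite_general {E : Type*} [NormedAddCommGroup E]
    [NormedSpace ℝ E] [FiniteDimensional ℝ E] [MeasurableSpace E] [BorelSpace E]
    (μ : Measure E) [μ.IsAddHaarMeasure] {p γ : ℝ} (hp : p < finrank ℝ E)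
    (hp' : finrank ℝ E < 2 * p) (hγ : 2 * (finrank ℝ E - p) < γ) :
    ∫⁻ x, ∫⁻ y, ENNReal.ofReal (‖x‖ ^ (-p) * ‖y‖ ^ (-p) * max ‖x - y‖ 1 ^ (-γ)) ∂μ ∂μ < ⊤ := by
  have hdim : (0 : ℝ) < finrank ℝ E := by linarith
  have : Nontrivial E := nontrivial_of_finrank_pos (R := ℝ) (by exact_mod_cast hdim)
  obtain ⟨q, hq, hqp, hqγ⟩ : ∃ q, finrank ℝ E - p < q ∧ q ≤ p ∧ 2 * q ≤ γ :=
    ⟨min p (γ / 2), lt_min (by linarith) (by linarith), min_le_left _ _,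
      by linarith [min_le_right p (γ / 2)]⟩
  let f : E → ENNReal := twoScaleWeight p (p + q)
  have pairwise_bound : ∀ᵐ x ∂μ, ∀ᵐ y ∂μ,
      ENNReal.ofReal (‖x‖ ^ (-p) * ‖y‖ ^ (-p) * max ‖x - y‖ 1 ^ (-γ)) ≤
        f x * f y + f x * f (x - y) + f y * f (x - y) := by
    filter_upwards [μ.ae_ne 0] with x hx
    filter_upwards [μ.ae_ne 0, μ.ae_ne x] with y hy hyx
    exact ofReal_riesz_le_twoScaleWeight_pairs (by linarith) hqp hqγ hx hy hyx.symm
  calc ∫⁻ x, ∫⁻ y, ENNReal.ofReal (‖x‖ ^ (-p) * ‖y‖ ^ (-p) * max ‖x - y‖ 1 ^ (-γ)) ∂μ ∂μ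
      ≤ ∫⁻ x, ∫⁻ y, (f x * f y + f x * f (x - y) + f y * f (x - y)) ∂μ ∂μ :=
        lintegral_mono_ae (pairwise_bound.mono fun _ ↦ lintegral_mono_ae)
    _ = 3 * (∫⁻ x, f x ∂μ) ^ 2 :=
        lintegral_lintegral_mul_add_mul_sub_add_mul_sub μ (measurable_twoScaleWeight _ _)
    _ < ⊤ := ENNReal.mul_lt_top (by simp)
        (ENNReal.pow_lt_top (lintegral_twoScaleWeight_lt_top μ hp (by linarith)))

/-- finiteness of the double Riesz integral with capped correlations,
Appendix B: for `d ≥ 3` and `γ ∈ (2,∞)`,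
`∫_{ℝ^d} ∫_{ℝ^d} |x|^{1−d} |y|^{1−d} (max(|x−y|, 1))^{−γ} dx dy < ∞`. -/
theorem double_riesz_integral_finite
    (d : ℕ) (hd : 3 ≤ d) (γ : ℝ) (hγ : 2 < γ) :
    (∫⁻ x : EuclideanSpace ℝ (Fin d), ∫⁻ y : EuclideanSpace ℝ (Fin d),
        ENNReal.ofReal
          (‖x‖ ^ (1 - (d : ℝ)) * ‖y‖ ^ (1 - (d : ℝ)) * max ‖x - y‖ 1 ^ (-γ))) < ⊤ := by
  have hd' : (3 : ℝ) ≤ d := by exact_mod_cast hd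
  simpa only [neg_sub] using double_riesz_integral_finite_general
    (volume : Measure (EuclideanSpace ℝ (Fin d))) (p := d - 1) (γ := γ)
    (by rw [finrank_euclideanSpace_fin]; linarith) (by rw [finrank_euclideanSpace_fin]; linarith)
    (by rw [finrank_euclideanSpace_fin]; linarith)

end
end
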